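/- arXiv:2311.12714 — 3 statements merged into one kernel-verified Lean document; each statement's English description precedes it below -/
import Mathlib

section
/- Let p be an odd prime with p > 3, let m be a primitive root modulo p, and define the sequence x : ℕ → ℕ by x k = m^k % p. Then the sequence satisfies, for all k ∈ ℕ, the linear recurrence of order (p-1)/2 + 1 given by (x (k + (p-1)/2 + 1) : ℤ) = x k - x (k+1) + x (k + (p-1)/2). (Existence part of the minimal-lifting-dimension theorem for the Diffie–Hellman cryptosystem: the lifting of dimension (p-1)/2 + 1 using the value-list observables admits an exact linear time-invariant representation, with recurrence coefficient vector α = (1, -1, 0, ..., 0, 1).) -/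
/-!
With `h = (p - 1) / 2`, the element `m ^ h` of the field `ZMod p` squares to `1` but is not `1`,
since `m` has order `p - 1 = 2 * h`; hence `m ^ h = -1`. So the residues of `m ^ k` and
`m ^ (k + h)` are nonzero and opposite modulo `p`, and their sum is exactly `p`
(`residue_add_residue_half_period`). Equating this sum at `k` and at `k + 1` gives the recurrence.
-/

theorem pow_half_eq_neg_one (p m : ℕ) (hp : p.Prime) (hp3 : 3 < p)
    (hm : orderOf (m : ZMod p) = p - 1) : (m : ZMod p) ^ ((p - 1) / 2) = -1 := by
  have : Fact p.Prime := ⟨hp⟩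
  have hodd : p % 2 = 1 := hp.eq_two_or_odd.resolve_left (by omega)
  have hsq : ((m : ZMod p) ^ ((p - 1) / 2)) ^ 2 = 1 := by
    rw [← pow_mul, show (p - 1) / 2 * 2 = p - 1 by omega, ← hm, pow_orderOf_eq_one]
  refine (eq_or_eq_neg_of_sq_eq_sq _ _ (hsq.trans (one_pow 2).symm)).resolve_left ?_
  exact pow_ne_one_of_lt_orderOf (by omega) (by omega)

theorem residue_add_residue_half_period (p m : ℕ) (hp : p.Prime) (hp3 : 3 < p)
    (hm : orderOf (m : ZMod p) = p - 1) (k : ℕ) :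
    m ^ k % p + m ^ (k + (p - 1) / 2) % p = p := by
  have : Fact p.Prime := ⟨hp⟩
  have hhalf := pow_half_eq_neg_one p m hp hp3 hm
  have hdvd : p ∣ m ^ k + m ^ (k + (p - 1) / 2) := by
    rw [← ZMod.natCast_eq_zero_iff]
    push_cast
    rw [pow_add, hhalf]
    ring
  have hne : ¬ p ∣ m ^ k := by
    intro hk
    have hm0 : (m : ZMod p) = 0 := (ZMod.natCast_eq_zero_iff _ _).2 (hp.dvd_of_dvd_pow hk)
    rw [hm0, zero_pow (by omega)] at hhalf
    exact neg_ne_zero.2 one_ne_zero hhalf.symm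
  have hpos : 0 < m ^ k % p := Nat.pos_of_ne_zero fun h0 => hne (Nat.dvd_of_mod_eq_zero h0)
  have hlt₁ := Nat.mod_lt (m ^ k) hp.pos
  have hlt₂ := Nat.mod_lt (m ^ (k + (p - 1) / 2)) hp.pos
  have hmod : p ∣ m ^ k % p + m ^ (k + (p - 1) / 2) % p := by
    rw [Nat.dvd_iff_mod_eq_zero, ← Nat.add_mod]
    exact Nat.mod_eq_zero_of_dvd hdvd
  -- The sum is a multiple `p * c` strictly between `0` and `2 * p`, so `c = 1`.
  obtain ⟨c, hc⟩ := hmod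
  have hc0 : 0 < c := Nat.pos_of_ne_zero (by rintro rfl; omega)
  have hc2 : c < 2 := by
    by_contra hcon
    have := Nat.mul_le_mul_left p (not_lt.1 hcon)
    omega
  obtain rfl : c = 1 := by omega
  omega

/-- **Existence part of the minimal-lifting-dimension theorem for Diffie–Hellman.**
For `p` an odd prime with `p > 3`, `m` a primitive root modulo `p`, and `x k = m ^ k % p`,
the sequence satisfies the order-`(p-1)/2 + 1` linear recurrence
`x (k + (p-1)/2 + 1) = x k - x (k+1) + x (k + (p-1)/2)` for all `k`,
i.e. the coefficient vector is `α = (1, -1, 0, ..., 0, 1)`. -/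
theorem dh_linear_recurrence_exists (p m : ℕ) (hp : p.Prime) (hp3 : 3 < p)
    (hm : orderOf (m : ZMod p) = p - 1) :
    ∀ k : ℕ, ((m ^ (k + (p - 1) / 2 + 1) % p : ℕ) : ℤ)
      = ((m ^ k % p : ℕ) : ℤ) - ((m ^ (k + 1) % p : ℕ) : ℤ)
        + ((m ^ (k + (p - 1) / 2) % p : ℕ) : ℤ) := by
  intro k
  have h₀ := residue_add_residue_half_period p m hp hp3 hm k
  have h₁ := residue_add_residue_half_period p m hp hp3 hm (k + 1)
  rw [show k + 1 + (p - 1) / 2 = k + (p - 1) / 2 + 1 by omega] at h₁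
  zify at h₀ h₁
  push_cast
  linarith
end

section
/- Let p be an odd prime with p > 3, let m be a primitive root modulo p, and define the sequence x : ℕ → ℕ by x k = m^k % p. Then there exists no vector α : Fin ((p-1)/2) → ℝ such that for all k ∈ ℕ, (x (k + (p-1)/2) : ℝ) = Σ_{j=0}^{(p-1)/2 - 1} α_j · x (k + j). (Minimality part of the minimal-lifting-dimension theorem: no exact linear time-invariant representation of the Diffie–Hellman dynamics exists with value-list observables of dimension (p-1)/2 or smaller.) -/
/-!
Put `n = (p - 1) / 2`. For an odd Dirichlet character `χ` mod `p`, multiply the recurrence, read as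
an identity between the residues `a * m ^ j`, by `χ a` and sum over `a`. With `w = (χ m)⁻¹` and
`X = ∑ a, χ a * a` this gives `X * w ^ n = X * ∑ j, α j * w ^ j`. Every `w` with `w ^ n = -1` arises
in this way, so once `X ≠ 0` is known, the polynomial `1 + ∑ j, α j z ^ j`, of degree less than `n`,
has `n` distinct roots and vanishes. Hence `∑ j, α j = -1`, and summing the recurrence over all
residues gives `S = -S` for `S = ∑ a, a > 0`, which is absurd.

The nonvanishing of `X` (a generalized Bernoulli number `B_{1,χ}` up to a factor) is the deep input,
`sum_mul_val_ne_zero`. If `X = 0`, then `L(χ, 0) = 0` by `LFunction_zero_eq_zero`; the functional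
equation then gives `L(χ⁻¹, 1) = 0`, against the nonvanishing of `L`-functions at `1`.

For `L(χ, 0) = 0`, group the Dirichlet series into blocks `∑ j, χ j * (j + p * k) ^ (-s)`. As both
`∑ j, χ j` and `∑ j, χ j * j` vanish, the first two Taylor terms of each block cancel, so the block
is `O(k ^ (-re s - 2))`. The series of blocks is therefore analytic in a neighbourhood of `0`,
agrees there with the continued `L`-function, and has every term equal to `0` at `s = 0`.
-/

open Complex in
lemma hasDerivAt_ofReal_cpow_aux {x : ℝ} (hx : 0 < x) (r : ℂ) :
    HasDerivAt (fun y : ℝ => (y : ℂ) ^ r) (r * (x : ℂ) ^ (r - 1)) x := by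
  have h := ((hasDerivAt_id (x : ℂ)).cpow_const (c := r) (by simp [hx])).comp_ofReal
  simpa using h

lemma cpow_sub_le {x y : ℝ} (hx : 0 < x) (hxy : x ≤ y) (r : ℂ) (hr : r.re ≤ 1) :
    ‖(y : ℂ) ^ r - (x : ℂ) ^ r‖ ≤ ‖r‖ * x ^ (r.re - 1) * (y - x) := by
  have h := (convex_Icc x y).norm_image_sub_le_of_norm_hasDerivWithin_le
    (f := fun t : ℝ => (t : ℂ) ^ r) (f' := fun t : ℝ => r * (t : ℂ) ^ (r - 1))
    (C := ‖r‖ * x ^ (r.re - 1))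
    (fun t ht => (hasDerivAt_ofReal_cpow_aux (hx.trans_le ht.1) r).hasDerivWithinAt)
    (fun t ht => ?_) (Set.left_mem_Icc.2 hxy) (Set.right_mem_Icc.2 hxy)
  · simpa [abs_of_nonneg (sub_nonneg.2 hxy)] using h
  · rw [norm_mul, Complex.norm_cpow_eq_rpow_re_of_pos (hx.trans_le ht.1)]
    gcongr
    simpa using Real.rpow_le_rpow_of_nonpos hx ht.1 (by linarith : r.re - 1 ≤ 0)

/-- First-order Taylor estimate for `t ↦ t ^ r`, with the second derivative bounded at the left
endpoint. -/
lemma cpow_taylor_le {x y : ℝ} (hx : 0 < x) (hxy : x ≤ y) (r : ℂ) (hr : r.re ≤ 2) :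
    ‖(y : ℂ) ^ r - (x : ℂ) ^ r - (y - x) * (r * (x : ℂ) ^ (r - 1))‖
      ≤ ‖r‖ * ‖r - 1‖ * x ^ (r.re - 2) * (y - x) ^ 2 := by
  have h := (convex_Icc x y).norm_image_sub_le_of_norm_hasDerivWithin_le
    (f := fun t : ℝ => (t : ℂ) ^ r - t * (r * (x : ℂ) ^ (r - 1)))
    (f' := fun t : ℝ => r * (t : ℂ) ^ (r - 1) - 1 * (r * (x : ℂ) ^ (r - 1)))
    (C := ‖r‖ * (‖r - 1‖ * x ^ (r.re - 2) * (y - x)))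
    (fun t ht => ((hasDerivAt_ofReal_cpow_aux (hx.trans_le ht.1) r).sub
      ((hasDerivAt_id (t : ℂ)).comp_ofReal.mul_const _)).hasDerivWithinAt)
    (fun t ht => ?_) (Set.left_mem_Icc.2 hxy) (Set.right_mem_Icc.2 hxy)
  · have e : ‖y - x‖ = y - x := by rw [Real.norm_eq_abs, abs_of_nonneg (sub_nonneg.2 hxy)]
    rw [e] at h
    refine le_trans (le_of_eq ?_) (h.trans (le_of_eq ?_))
    · congr 1; ring
    · ring
  · rw [one_mul, ← mul_sub, norm_mul]
    gcongr
    refine (cpow_sub_le hx ht.1 (r - 1) (by simp; linarith)).trans ?_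
    have : (r - 1).re - 1 = r.re - 2 := by simp; ring
    rw [this]
    gcongr
    exact ht.2

open Complex in
/-- If the zeroth and first moments of `Φ` over the representatives `0, …, N - 1` vanish, then so
does its `L`-function at `0`. The hypothesis `Φ 0 = 0` removes the term `0 ^ (-s)`. -/
lemma LFunction_zero_eq_zero {N : ℕ} [NeZero N] (Φ : ZMod N → ℂ) (h0 : Φ 0 = 0)
    (h1 : ∑ j, Φ j = 0) (h2 : ∑ j, Φ j * (j.val : ℂ) = 0) : ZMod.LFunction Φ 0 = 0 := by
  have hN : (0 : ℝ) < N := by exact_mod_cast NeZero.pos N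
  -- The block of the Dirichlet series over `N * n ≤ k < N * (n + 1)`.
  let F : ℕ → ℂ → ℂ := fun n s => ∑ j : ZMod N, Φ j * (((j.val + N * n : ℕ) : ℝ) : ℂ) ^ (-s)
  -- A convex domain containing `0` and meeting the half-plane of absolute convergence; on it the
  -- blocks are bounded by a constant times `n ^ (-3 / 2)`.
  let U : Set ℂ := {s | -1 / 2 < s.re} ∩ Metric.ball 0 3
  have hUo : IsOpen U := (isOpen_lt continuous_const continuous_re).inter Metric.isOpen_ball
  have hUc : IsPreconnected U :=
    ((convex_halfSpace_re_gt _).inter (convex_ball _ _)).isPreconnected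
  have hF : ∀ n, Differentiable ℂ (F n) := by
    intro n
    refine Differentiable.fun_sum fun j _ => ?_
    by_cases hj : j = 0
    · simp [hj, h0]
    · refine Differentiable.const_mul (differentiable_id.neg.const_cpow (Or.inl ?_)) _
      have : 0 < j.val := Nat.pos_of_ne_zero (by simpa using hj)
      norm_cast
      omega
  let C : ℝ := ∑ j : ZMod N, ‖Φ j‖ * (3 * 4 * (j.val : ℝ) ^ 2)
  have hbound : ∀ n : ℕ, ∀ s ∈ U, ‖F (n + 1) s‖ ≤ C * (1 / ((n + 1 : ℕ) : ℝ) ^ (3 / 2 : ℝ)) := by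
    rintro n s ⟨hs, hs3⟩
    have hs : -1 / 2 < s.re := hs
    have hs3 : ‖s‖ < 3 := by simpa using hs3
    set x : ℝ := ((N * (n + 1) : ℕ) : ℝ) with hxdef
    have hN1 : 1 ≤ N := NeZero.pos N
    have hxn : ((n + 1 : ℕ) : ℝ) ≤ x := by
      rw [hxdef]; exact_mod_cast Nat.le_mul_of_pos_left _ hN1
    have hn1 : (1 : ℝ) ≤ ((n + 1 : ℕ) : ℝ) := by exact_mod_cast Nat.le_add_left 1 n
    have hx1 : 1 ≤ x := hn1.trans hxn
    have hx : 0 < x := by linarith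
    -- The two subtracted Taylor terms contribute multiples of the vanishing moments.
    have key : F (n + 1) s = ∑ j : ZMod N, Φ j * ((((j.val + N * (n + 1) : ℕ) : ℝ) : ℂ) ^ (-s)
        - (x : ℂ) ^ (-s) - ((((j.val + N * (n + 1) : ℕ) : ℝ) : ℂ) - x)
          * (-s * (x : ℂ) ^ (-s - 1))) := by
      have e : ∀ j : ZMod N, ((((j.val + N * (n + 1) : ℕ) : ℝ) : ℂ) - x) = (j.val : ℂ) := by
        intro j; rw [hxdef]; push_cast; ring
      simp_rw [e, mul_sub, Finset.sum_sub_distrib, ← mul_assoc, ← Finset.sum_mul, h1, h2]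
      simp [F]
    rw [key, Finset.sum_mul]
    refine (norm_sum_le _ _).trans (Finset.sum_le_sum fun j _ => ?_)
    rw [norm_mul, mul_assoc]
    gcongr
    refine (cpow_taylor_le hx ?_ (-s) (by simp; linarith)).trans ?_
    · rw [hxdef]; exact_mod_cast Nat.le_add_left _ _
    · have e : ((j.val + N * (n + 1) : ℕ) : ℝ) - x = j.val := by rw [hxdef]; push_cast; ring
      have a1 : ‖-s‖ ≤ 3 := by rw [norm_neg]; exact hs3.le
      have a2 : ‖-s - 1‖ ≤ 4 := by
        refine (norm_sub_le _ _).trans ?_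
        simp; linarith
      have a3 : x ^ ((-s).re - 2) ≤ 1 / ((n + 1 : ℕ) : ℝ) ^ (3 / 2 : ℝ) := by
        rw [one_div, ← Real.rpow_neg (by positivity)]
        calc x ^ ((-s).re - 2) ≤ x ^ (-(3 / 2) : ℝ) :=
              Real.rpow_le_rpow_of_exponent_le hx1 (by simp; linarith)
          _ ≤ _ := Real.rpow_le_rpow_of_nonpos (by linarith) hxn (by norm_num)
      rw [e]
      calc _ ≤ 3 * 4 * (1 / ((n + 1 : ℕ) : ℝ) ^ (3 / 2 : ℝ)) * (j.val : ℝ) ^ 2 := by gcongr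
        _ = _ := by ring
  have hsum : Summable fun n : ℕ => C * (1 / ((n + 1 : ℕ) : ℝ) ^ (3 / 2 : ℝ)) :=
    (((summable_nat_add_iff 1).2
      (Real.summable_one_div_nat_rpow.2 (by norm_num : (1 : ℝ) < 3 / 2)))).mul_left C
  let G : ℂ → ℂ := fun s => F 0 s + ∑' n, F (n + 1) s
  have hG : DifferentiableOn ℂ G U :=
    (hF 0).differentiableOn.add (differentiableOn_tsum_of_summable_norm hsum
      (fun n => (hF (n + 1)).differentiableOn) hUo hbound)
  have hL : Differentiable ℂ (ZMod.LFunction Φ) := ZMod.differentiable_LFunction_of_sum_zero h1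
  have heq : ∀ s ∈ U, 1 < s.re → ZMod.LFunction Φ s = G s := by
    intro s hsU hs
    have hS := ZMod.LSeriesSummable_of_one_lt_re Φ hs
    have hterm : ∀ (j : ZMod N) (n : ℕ), LSeries.term (fun n => Φ n) s (j.val + N * n)
        = Φ j * (((j.val + N * n : ℕ) : ℝ) : ℂ) ^ (-s) := by
      intro j n
      have hc : ((j.val + N * n : ℕ) : ZMod N) = j := by simp
      rw [LSeries.term_def]
      split_ifs with h
      · have : j = 0 := by simpa using (Nat.add_eq_zero_iff.1 h).1
        simp [this, h0]
      · rw [hc, cpow_neg, div_eq_mul_inv, ofReal_natCast]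
    have hS' : ∀ j : ZMod N, Summable fun n : ℕ =>
        Φ j * (((j.val + N * n : ℕ) : ℝ) : ℂ) ^ (-s) := by
      intro j
      have := hS.comp_injective (i := fun n : ℕ => j.val + N * n) (by
        intro a b hab
        simpa [NeZero.ne N] using hab)
      exact this.congr fun n => (hterm j n)
    have hFs : Summable fun n => F n s := summable_sum fun j _ => hS' j
    rw [ZMod.LFunction_eq_LSeries Φ hs, LSeries, Nat.sumByResidueClasses hS N]
    simp_rw [hterm]
    rw [← Summable.tsum_finsetSum (fun j _ => hS' j)]
    exact hFs.tsum_eq_zero_add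
  have h2U : (2 : ℂ) ∈ U := by
    constructor
    · show (-1 / 2 : ℝ) < (2 : ℂ).re
      norm_num
    · rw [mem_ball_zero_iff]
      norm_num
  have h0U : (0 : ℂ) ∈ U := by
    constructor
    · show (-1 / 2 : ℝ) < (0 : ℂ).re
      norm_num
    · simp
  have hfin := (hL.differentiableOn.analyticOnNhd hUo).eqOn_of_preconnected_of_eventuallyEq
    (hG.analyticOnNhd hUo) hUc h2U (by
      filter_upwards [hUo.mem_nhds h2U, (isOpen_lt continuous_const continuous_re).mem_nhds
        (show (1 : ℝ) < (2 : ℂ).re by norm_num)] with s hs hs1 using heq s hs hs1) h0U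
  rw [hfin]
  have : ∀ n, F n 0 = 0 := fun n => by simp [F, h1]
  simp [G, this]

/-- The generalized Bernoulli number `B_{1,χ}` of an odd character modulo a prime is nonzero (here
multiplied by `p`). -/
lemma sum_mul_val_ne_zero {p : ℕ} [Fact p.Prime] (χ : DirichletCharacter ℂ p) (hχ : χ.Odd) :
    ∑ a : ZMod p, χ a * (a.val : ℂ) ≠ 0 := by
  intro h
  have hne : χ ≠ 1 := by
    rintro rfl
    have : (1 : DirichletCharacter ℂ p) (-1) = -1 := hχ
    rw [MulChar.one_apply (by simp)] at this
    norm_num at this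
  have hL0 : ZMod.LFunction χ 0 = 0 :=
    LFunction_zero_eq_zero _ (MulChar.map_zero χ) (MulChar.sum_eq_zero_of_ne_one hne) h
  have hprim : χ.IsPrimitive := by
    rcases (Nat.dvd_prime (Fact.out : p.Prime)).1 χ.conductor_dvd_level with h1 | h1
    · exact absurd (χ.eq_one_iff_conductor_eq_one.2 h1) hne
    · exact h1
  have hg : gaussSum χ ZMod.stdAddChar ≠ 0 :=
    gaussSum_ne_zero_of_nontrivial (by simp [NeZero.ne]) hne (ZMod.isPrimitive_stdAddChar p)
  have hp0 : (p : ℂ) ≠ 0 := by exact_mod_cast NeZero.ne p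
  have hc0 : DirichletCharacter.completedLFunction χ 0 = 0 := by
    have := DirichletCharacter.LFunction_eq_completed_div_gammaFactor χ 0
      (Or.inr (Fact.out : p.Prime).ne_one)
    rw [DirichletCharacter.LFunction, hL0, hχ.gammaFactor_def, eq_comm, div_eq_zero_iff] at this
    simpa [Complex.Gammaℝ_one] using this
  have hfe := hprim.completedLFunction_one_sub 1
  have hroot : DirichletCharacter.rootNumber χ ≠ 0 := by
    rw [DirichletCharacter.rootNumber, if_neg hχ.not_even]
    simp [hg, Complex.cpow_eq_zero_iff, hp0]
  rw [sub_self, hc0, eq_comm] at hfe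
  have hc1 : DirichletCharacter.completedLFunction χ⁻¹ 1 = 0 := by
    simpa [hroot, hp0, Complex.cpow_eq_zero_iff] using hfe
  have := DirichletCharacter.LFunction_eq_completed_div_gammaFactor χ⁻¹ 1 (Or.inl one_ne_zero)
  rw [hc1, zero_div] at this
  exact DirichletCharacter.LFunction_apply_one_ne_zero (inv_ne_one.2 hne) this

/-- **Minimality part of the minimal-lifting-dimension theorem for Diffie–Hellman.**
For `p` an odd prime with `p > 3`, `m` a primitive root modulo `p`, and `x k = m ^ k % p`,
there is no coefficient vector `α : Fin ((p-1)/2) → ℝ` such that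
`x (k + (p-1)/2) = ∑ j, α j * x (k + j)` for all `k`; i.e. no exact linear
time-invariant representation of dimension `(p-1)/2` (or smaller) exists. -/
theorem dh_no_smaller_linear_recurrence (p m : ℕ) (hp : p.Prime) (hp3 : 3 < p)
    (hm : orderOf (m : ZMod p) = p - 1) :
    ¬ ∃ α : Fin ((p - 1) / 2) → ℝ, ∀ k : ℕ,
      ((m ^ (k + (p - 1) / 2) % p : ℕ) : ℝ)
        = ∑ j : Fin ((p - 1) / 2), α j * ((m ^ (k + (j : ℕ)) % p : ℕ) : ℝ) := by
  have : Fact p.Prime := ⟨hp⟩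
  obtain ⟨n, hn⟩ : ∃ n, n = (p - 1) / 2 := ⟨_, rfl⟩
  rw [← hn]
  rintro ⟨α, hα⟩
  have h2n : p - 1 = 2 * n := by
    have := hp.eq_two_or_odd
    omega
  have hnpos : 0 < n := by omega
  have hm0 : (m : ZMod p) ≠ 0 := by
    intro h
    rw [h] at hm
    simp at hm
    omega
  let g : (ZMod p)ˣ := Units.mk0 (m : ZMod p) hm0
  have hg : ∀ x, x ∈ Subgroup.zpowers g := by
    have ho : orderOf g = Nat.card (ZMod p)ˣ := by
      rw [← orderOf_units, Nat.card_eq_fintype_card, ZMod.card_units]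
      exact hm
    intro x
    rw [Subgroup.eq_top_of_card_eq _ ((Nat.card_zpowers g).trans ho)]
    trivial
  -- The recurrence, transported from exponents `k` to all residues `a`, with `a = 0` trivial.
  have hrec : ∀ a : ZMod p, ((a * (m : ZMod p) ^ n).val : ℂ)
      = ∑ j : Fin n, (α j : ℂ) * ((a * (m : ZMod p) ^ (j : ℕ)).val : ℂ) := by
    intro a
    by_cases ha : a = 0
    · simp [ha]
    · obtain ⟨k, hk⟩ := (mem_powers_iff_mem_zpowers).2 (hg (Units.mk0 a ha))
      have hk' : (m : ZMod p) ^ k = a := by simpa [g] using congrArg Units.val hk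
      have hv : ∀ i : ℕ, (a * (m : ZMod p) ^ i).val = m ^ (k + i) % p := by
        intro i
        rw [← hk', ← pow_add, ← Nat.cast_pow, ZMod.val_natCast]
      simp_rw [hv]
      exact_mod_cast hα k
  have hneg : (m : ZMod p) ^ n = -1 := by
    have h1 : ((m : ZMod p) ^ n) ^ 2 = 1 := by
      rw [← pow_mul, mul_comm, ← h2n, ← hm, pow_orderOf_eq_one]
    refine (eq_or_eq_neg_of_sq_eq_sq _ 1 (by rw [h1, one_pow])).resolve_left ?_
    intro h
    have := orderOf_dvd_of_pow_eq_one h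
    rw [hm, h2n] at this
    have := Nat.le_of_dvd hnpos this
    omega
  have hroots : ∀ w : ℂ, w ^ n = -1 → 1 + ∑ j : Fin n, (α j : ℂ) * w ^ (j : ℕ) = 0 := by
    intro w hw
    have hw0 : w ≠ 0 := by
      rintro rfl
      simp [hnpos.ne'] at hw
    have hmem : Units.mk0 w⁻¹ (inv_ne_zero hw0) ∈ rootsOfUnity (Fintype.card (ZMod p)ˣ) ℂ := by
      rw [mem_rootsOfUnity, ZMod.card_units, h2n]
      ext
      simp [mul_comm 2 n, pow_mul, hw]
    -- The character with `χ m = w⁻¹`; it is odd because `-1 = m ^ n`.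
    let χ : DirichletCharacter ℂ p := MulChar.ofRootOfUnity hmem hg
    have hχm : χ (m : ZMod p) = w⁻¹ := MulChar.ofRootOfUnity_spec hmem hg
    have hodd : χ.Odd := by
      show χ (-1) = -1
      rw [← hneg, map_pow, hχm, inv_pow, hw]
      norm_num
    have hX := sum_mul_val_ne_zero χ hodd
    set X := ∑ a : ZMod p, χ a * (a.val : ℂ) with hXdef
    have hT : ∀ i : ℕ, ∑ a : ZMod p, χ a * ((a * (m : ZMod p) ^ i).val : ℂ) = w ^ i * X := by
      intro i
      rw [hXdef, ← Equiv.sum_comp (Equiv.mulRight₀ _ (pow_ne_zero i hm0))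
        (fun a : ZMod p => χ a * (a.val : ℂ)), Finset.mul_sum]
      refine Finset.sum_congr rfl fun a _ => ?_
      change _ = w ^ i * (χ (a * (m : ZMod p) ^ i) * _)
      rw [map_mul, map_pow, hχm, inv_pow]
      field_simp
      rfl
    have := hT n
    simp_rw [hrec, Finset.mul_sum] at this
    rw [Finset.sum_comm, hw] at this
    have h3 : ∑ j : Fin n, (α j : ℂ) * (w ^ (j : ℕ) * X) = -1 * X := by
      rw [← this]
      refine Finset.sum_congr rfl fun j _ => ?_
      rw [← hT, Finset.mul_sum]
      exact Finset.sum_congr rfl fun a _ => by ring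
    have h4 : (1 + ∑ j : Fin n, (α j : ℂ) * w ^ (j : ℕ)) * X = 0 := by
      rw [add_mul, Finset.sum_mul]
      simp_rw [mul_assoc]
      rw [h3]; ring
    exact (mul_eq_zero.1 h4).resolve_right hX
  -- The odd powers of a primitive `2n`-th root of unity are `n` distinct roots of `R`, whose degree
  -- is less than `n`.
  let R : Polynomial ℂ := 1 + ∑ j : Fin n, Polynomial.C (α j : ℂ) * Polynomial.X ^ (j : ℕ)
  have hReval : ∀ w, R.eval w = 1 + ∑ j : Fin n, (α j : ℂ) * w ^ (j : ℕ) := by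
    intro w
    simp [R, Polynomial.eval_finsetSum]
  have hζ := Complex.isPrimitiveRoot_exp (2 * n) (by omega)
  set ζ := Complex.exp (2 * Real.pi * Complex.I / (2 * n : ℕ)) with hζdef
  have hζn : ζ ^ n = -1 := by
    have h1 : (ζ ^ n) ^ 2 = 1 := by rw [← pow_mul, mul_comm, hζ.pow_eq_one]
    exact (eq_or_eq_neg_of_sq_eq_sq _ 1 (by rw [h1, one_pow])).resolve_left (hζ.pow_ne_one_of_pos_of_lt hnpos.ne' (by omega))
  have hR : R = 0 := by
    refine Polynomial.eq_zero_of_natDegree_lt_card_of_eval_eq_zero R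
      (f := fun i : Fin n => ζ ^ (2 * (i : ℕ) + 1)) ?_ ?_ ?_
    · intro i j hij
      have := hζ.pow_inj (by omega) (by omega) hij
      ext; omega
    · intro i
      rw [hReval]
      apply hroots
      rw [← pow_mul, mul_comm, pow_mul, hζn, Odd.neg_one_pow ⟨i, rfl⟩]
    · rw [Fintype.card_fin]
      refine Nat.lt_of_le_of_lt (m := n - 1) ?_ (by omega)
      refine Polynomial.natDegree_add_le_of_degree_le (by simp) ?_
      refine Polynomial.natDegree_sum_le_of_forall_le _ _ fun j _ => ?_
      exact (Polynomial.natDegree_C_mul_X_pow_le _ _).trans (by omega)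
  have hone : (1 : ℂ) + ∑ j : Fin n, (α j : ℂ) = 0 := by
    have := hReval 1
    rw [hR] at this
    simpa using this.symm
  -- The trivial character: summing the recurrence over all residues.
  have hS : ∀ i : ℕ, ∑ a : ZMod p, ((a * (m : ZMod p) ^ i).val : ℂ)
      = ∑ a : ZMod p, (a.val : ℂ) := fun i =>
    Equiv.sum_comp (Equiv.mulRight₀ _ (pow_ne_zero i hm0)) fun a : ZMod p => (a.val : ℂ)
  have h5 := hS n
  simp_rw [hrec] at h5
  rw [Finset.sum_comm] at h5
  simp_rw [← Finset.mul_sum, hS, ← Finset.sum_mul] at h5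
  have h6 : ∑ a : ZMod p, (a.val : ℂ) = 0 := by
    linear_combination (1 / 2) * (∑ a : ZMod p, (a.val : ℂ)) * hone - (1 / 2) * h5
  have h7 : ∑ a : ZMod p, a.val = 0 := by exact_mod_cast h6
  have h8 := (Finset.sum_eq_zero_iff.1 h7) 1 (Finset.mem_univ _)
  have : Fact (1 < p) := ⟨hp.one_lt⟩
  simp at h8
end

section
/- Let p₁ and p₂ be two distinct odd primes, set p = p₁·p₂, let m be an integer with 1 < m < p coprime to p, and define x : ℕ → ℕ by x k = m^k % p. Let λ(p) = Monoid.exponent (ZMod p)ˣ. For any natural numbers q and N, let Z be the real (q+1) × N matrix with entries Z (j, k) = x (k + j). Then the rank of Z is at most λ(p). -/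
/-!
The sequence `m ^ k % p` is periodic with period `λ(p)`, because every unit modulo `p` is killed
by the exponent of `(ZMod p)ˣ`. Column `k` of the data matrix therefore equals column
`k % λ(p)`, so every column is one of `λ(p)` vectors: the matrix is a column reindexing of a
matrix with `λ(p)` columns.
-/

/-- Powers of `m` modulo `n` depend only on the exponent modulo `λ(n)`. -/
theorem pow_mod_exponent (m n k j : ℕ) (hcop : Nat.Coprime m n) :
    m ^ (k % Monoid.exponent (ZMod n)ˣ + j) % n = m ^ (k + j) % n := by
  set L := Monoid.exponent (ZMod n)ˣ with hL
  have hone : ((m : ZMod n)) ^ L = 1 := by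
    have h := congrArg Units.val (Monoid.pow_exponent_eq_one (ZMod.unitOfCoprime m hcop))
    simpa using h
  apply (ZMod.natCast_eq_natCast_iff' _ _ n).mp
  push_cast
  rw [pow_add, pow_add, pow_eq_pow_mod k hone]

/-- **Rank bound on the EDMD data matrix for RSA.**
Let `p₁, p₂` be distinct odd primes, `p = p₁ * p₂`, `m` an integer with `1 < m < p`
coprime to `p`, and `x k = m ^ k % p`. For any `q` and `N`, the real `(q+1) × N`
matrix `Z` with entries `Z j k = x (k + j)` has rank at most
`λ(p) = Monoid.exponent (ZMod p)ˣ`. -/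
theorem rsa_data_matrix_rank_le (p₁ p₂ m q N : ℕ)
    (hp₁ : p₁.Prime) (hp₂ : p₂.Prime) (hodd₁ : Odd p₁) (hodd₂ : Odd p₂) (hne : p₁ ≠ p₂)
    (hm1 : 1 < m) (hmp : m < p₁ * p₂) (hcop : Nat.Coprime m (p₁ * p₂)) :
    (Matrix.of (fun (j : Fin (q + 1)) (k : Fin N) =>
      ((m ^ ((k : ℕ) + (j : ℕ)) % (p₁ * p₂) : ℕ) : ℝ))).rank
      ≤ Monoid.exponent (ZMod (p₁ * p₂))ˣ := by
  have : NeZero (p₁ * p₂) := ⟨by omega⟩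
  -- Positivity of the exponent makes `k % L` a valid column index.
  have hpos : 0 < Monoid.exponent (ZMod (p₁ * p₂))ˣ :=
    Nat.pos_of_ne_zero Monoid.exponent_ne_zero_of_finite
  set L := Monoid.exponent (ZMod (p₁ * p₂))ˣ with hL
  let A : Matrix (Fin (q + 1)) (Fin L) ℝ :=
    Matrix.of fun j k => ((m ^ ((k : ℕ) + (j : ℕ)) % (p₁ * p₂) : ℕ) : ℝ)
  have hZ : Matrix.of (fun (j : Fin (q + 1)) (k : Fin N) =>
      ((m ^ ((k : ℕ) + (j : ℕ)) % (p₁ * p₂) : ℕ) : ℝ))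
      = A.submatrix id (fun k : Fin N => ⟨(k : ℕ) % L, Nat.mod_lt _ hpos⟩) := by
    ext j k
    simp only [A, Matrix.submatrix_apply, Matrix.of_apply, id]
    rw [hL, pow_mod_exponent m _ _ _ hcop]
  rw [hZ]
  exact (Matrix.rank_submatrix_le _ _ _).trans A.rank_le_width
end
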